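/- For every nonnegative integer m and all x, t ∈ ℂ, the series Σ_{n=0}^{∞} φ_{n+m}(x) · tⁿ/n! converges absolutely and equals e^{x(e^t−1)} · φ_m(x e^t). -/

import Mathlib

/-- Stirling numbers of the second kind. -/
def stirling2 : ℕ → ℕ → ℕ
  | 0, 0 => 1
  | 0, _ + 1 => 0
  | _ + 1, 0 => 0
  | n + 1, k + 1 => (k + 1) * stirling2 n (k + 1) + stirling2 n k

/-- The exponential polynomials φₙ(x) = Σ_{k=0}^{n} S(n,k) xᵏ. -/
noncomputable def expPoly (n : ℕ) (x : ℂ) : ℂ :=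
  ∑ k ∈ Finset.range (n + 1), (stirling2 n k : ℂ) * x ^ k

theorem stirling2_eq_zero_of_lt : ∀ (n k : ℕ), n < k → stirling2 n k = 0
  | 0, 0, h => absurd h (by omega)
  | 0, _ + 1, _ => by simp [stirling2]
  | _ + 1, 0, h => absurd h (by omega)
  | n + 1, k + 1, h => by
    rw [stirling2, stirling2_eq_zero_of_lt n (k + 1) (by omega),
      stirling2_eq_zero_of_lt n k (by omega), mul_zero]

theorem expPoly_succ (m : ℕ) (y : ℂ) :
    expPoly (m + 1) y = y * (expPoly m y +
      ∑ k ∈ Finset.range (m + 1), (stirling2 m k : ℂ) * ((k : ℂ) * y ^ (k - 1))) := by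
  have h1 : ∑ k ∈ Finset.range (m + 1), ((k : ℂ) + 1) * stirling2 m (k + 1) * y ^ (k + 1)
      = ∑ k ∈ Finset.range (m + 1), y * ((stirling2 m k : ℂ) * ((k : ℂ) * y ^ (k - 1))) := by
    have h2 : ∑ k ∈ Finset.range (m + 1 + 1), (k : ℂ) * stirling2 m k * y ^ k
        = ∑ k ∈ Finset.range (m + 1), ((k : ℂ) + 1) * stirling2 m (k + 1) * y ^ (k + 1) := by
      rw [Finset.sum_range_succ']
      simp
    rw [← h2, Finset.sum_range_succ, stirling2_eq_zero_of_lt m (m + 1) (by omega)]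
    simp only [Nat.cast_zero, mul_zero, zero_mul, add_zero]
    refine Finset.sum_congr rfl fun k _ => ?_
    cases k with
    | zero => simp
    | succ k => simp only [Nat.add_sub_cancel]; ring
  rw [mul_add, Finset.mul_sum, ← h1, expPoly, Finset.sum_range_succ', expPoly, Finset.mul_sum,
    ← Finset.sum_add_distrib]
  simp only [stirling2, Nat.cast_zero, zero_mul, add_zero]
  refine Finset.sum_congr rfl fun k _ => ?_
  push_cast
  ring

theorem hasDerivAt_expPoly (m : ℕ) (y : ℂ) :
    HasDerivAt (expPoly m)
      (∑ k ∈ Finset.range (m + 1), (stirling2 m k : ℂ) * ((k : ℂ) * y ^ (k - 1))) y := by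
  unfold expPoly
  exact HasDerivAt.fun_sum fun k _ => (hasDerivAt_pow k y).const_mul _

/-- The right-hand side of the generating function identity. -/
noncomputable def genRhs (x : ℂ) (m : ℕ) (t : ℂ) : ℂ :=
  Complex.exp (x * (Complex.exp t - 1)) * expPoly m (x * Complex.exp t)

theorem hasDerivAt_genRhs (x : ℂ) (m : ℕ) (t : ℂ) :
    HasDerivAt (genRhs x m) (genRhs x (m + 1) t) t := by
  have h1 : HasDerivAt (fun t => x * Complex.exp t) (x * Complex.exp t) t :=
    (Complex.hasDerivAt_exp t).const_mul x
  have h2 : HasDerivAt (fun t => x * (Complex.exp t - 1)) (x * Complex.exp t) t :=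
    ((Complex.hasDerivAt_exp t).sub_const 1).const_mul x
  have h3 := h2.cexp.mul ((hasDerivAt_expPoly m (x * Complex.exp t)).comp t h1)
  refine h3.congr_deriv ?_
  simp only [genRhs, expPoly_succ, Function.comp]
  ring

theorem iteratedDeriv_genRhs (x : ℂ) (m n : ℕ) :
    iteratedDeriv n (genRhs x m) = genRhs x (n + m) := by
  induction n with
  | zero => simp
  | succ n ih =>
    rw [iteratedDeriv_succ, ih]
    funext t
    rw [(hasDerivAt_genRhs x (n + m) t).deriv, Nat.add_right_comm]

theorem stmt3 (m : ℕ) (x t : ℂ) :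
    Summable (fun n : ℕ => ‖expPoly (n + m) x * t ^ n / (n.factorial : ℂ)‖) ∧
    HasSum (fun n : ℕ => expPoly (n + m) x * t ^ n / (n.factorial : ℂ))
      (Complex.exp (x * (Complex.exp t - 1)) * expPoly m (x * Complex.exp t)) := by
  have hd : Differentiable ℂ (genRhs x m) := fun s => (hasDerivAt_genRhs x m s).differentiableAt
  have h := Complex.hasSum_taylorSeries_of_entire hd 0 t
  have h' : HasSum (fun n : ℕ => expPoly (n + m) x * t ^ n / (n.factorial : ℂ))
      (genRhs x m t) := by
    have e : (fun n : ℕ => expPoly (n + m) x * t ^ n / (n.factorial : ℂ)) =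
        fun n : ℕ => ((n.factorial : ℂ)⁻¹ • (t - 0) ^ n • iteratedDeriv n (genRhs x m) 0) := by
      funext n
      rw [iteratedDeriv_genRhs]
      simp only [genRhs, Complex.exp_zero, sub_self, mul_zero, mul_one, one_mul, sub_zero,
        smul_eq_mul]
      ring
    rw [e]
    exact h
  exact ⟨h'.summable.norm, h'⟩
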